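/- Let N ≥ 5 be an integer. The quotient of the normalizer in SL(2,ℝ) of the subgroup ±Γ(N) by ±Γ(N) is isomorphic as a group to PSL(2, ℤ/Nℤ), i.e. to the quotient of SL(2, ℤ/Nℤ) by the subgroup {±I}. -/

import Mathlib

open Matrix CongruenceSubgroup

/-- The reduction-of-scalars map `SL(2, ℤ) →* SL(2, ℝ)`. -/
def SL2ZtoSL2R : Matrix.SpecialLinearGroup (Fin 2) ℤ →* Matrix.SpecialLinearGroup (Fin 2) ℝ :=
  Matrix.SpecialLinearGroup.map (Int.castRingHom ℝ)

/-- The subgroup `±Γ(N)` of `SL(2, ℝ)`, generated by the image of `Γ(N)` and `-1`. -/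
def PMGamma (N : ℕ) : Subgroup (Matrix.SpecialLinearGroup (Fin 2) ℝ) :=
  (Gamma N).map SL2ZtoSL2R ⊔ Subgroup.zpowers (-1)

/-- The subgroup `{±1}` of `SL(2, ℤ/Nℤ)` is normal (it is central). -/
instance zpowersNegOneNormal (N : ℕ) :
    (Subgroup.zpowers (-1 : Matrix.SpecialLinearGroup (Fin 2) (ZMod N))).Normal := by
  constructor
  intro x hx g
  obtain ⟨k, rfl⟩ := Subgroup.mem_zpowers_iff.mp hx
  refine Subgroup.mem_zpowers_iff.mpr ⟨k, ?_⟩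
  have h : Commute g ((-1 : Matrix.SpecialLinearGroup (Fin 2) (ZMod N)) ^ k) :=
    ((Commute.neg_one_left g).symm).zpow_right k
  rw [h.eq, mul_assoc, mul_inv_cancel, mul_one]

/-! ### Reduction `SL(2, ℤ) → SL(2, ℤ/Nℤ)` is surjective -/

/-- If `c ≠ 0` and `c`, `d`, `n` have no common prime factor, then some element of the residue
class of `d` modulo `n` is coprime to `c`. -/
theorem exists_isCoprime_add_mul {c d n : ℤ} (hc : c ≠ 0)
    (h : ∀ p : ℕ, p.Prime → (p : ℤ) ∣ c → (p : ℤ) ∣ d → ¬ (p : ℤ) ∣ n) :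
    ∃ t : ℤ, IsCoprime c (d + n * t) := by
  classical
  let S : Finset ℕ := c.natAbs.primeFactors.filter fun p => ¬ (p : ℤ) ∣ d
  refine ⟨((∏ p ∈ S, p : ℕ) : ℤ), ?_⟩
  rw [Int.isCoprime_iff_gcd_eq_one]
  by_contra hg
  obtain ⟨p, hp, hpg⟩ := Nat.exists_prime_and_dvd hg
  have hpg' : (p : ℤ) ∣ (Int.gcd c (d + n * ((∏ p ∈ S, p : ℕ) : ℤ)) : ℤ) := by
    exact_mod_cast hpg
  have hpc : (p : ℤ) ∣ c := hpg'.trans (Int.gcd_dvd_left ..)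
  have hpd := hpg'.trans (Int.gcd_dvd_right ..)
  have hpi : Prime (p : ℤ) := Nat.prime_iff_prime_int.mp hp
  by_cases hd : (p : ℤ) ∣ d
  · rcases hpi.dvd_or_dvd ((dvd_add_right hd).mp hpd) with hn | ht
    · exact h p hp hpc hd hn
    · obtain ⟨q, hq, hpq⟩ :=
        (Prime.dvd_finsetProd_iff hp.prime _).mp (Int.natCast_dvd_natCast.mp ht)
      rw [Finset.mem_filter] at hq
      rw [(Nat.prime_dvd_prime_iff_eq hp (Nat.prime_of_mem_primeFactors hq.1)).mp hpq] at hd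
      exact hq.2 hd
  · have hpS : p ∈ S := Finset.mem_filter.mpr ⟨Nat.mem_primeFactors.mpr
      ⟨hp, Int.natCast_dvd.mp hpc, Int.natAbs_ne_zero.mpr hc⟩, hd⟩
    have ht : (p : ℤ) ∣ ((∏ p ∈ S, p : ℕ) : ℤ) :=
      Int.natCast_dvd_natCast.mpr (Finset.dvd_prod_of_mem _ hpS)
    exact hd ((dvd_add_left (ht.mul_left n)).mp hpd)

/-- Strong approximation for `SL(2)`: the reduction map to `SL(2, ℤ/Nℤ)` is surjective. -/
theorem SL2_reduction_surjective (N : ℕ) [NeZero N] :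
    Function.Surjective (SpecialLinearGroup.map (n := Fin 2) (Int.castRingHom (ZMod N))) := by
  intro g
  obtain ⟨a, ha⟩ := ZMod.intCast_surjective (g 0 0)
  obtain ⟨b, hb⟩ := ZMod.intCast_surjective (g 0 1)
  obtain ⟨c, hc, hc0⟩ : ∃ c : ℤ, (c : ZMod N) = g 1 0 ∧ c ≠ 0 := by
    obtain ⟨c, hc⟩ := ZMod.intCast_surjective (g 1 0)
    by_cases h : c = 0
    · exact ⟨N, by simp [← hc, h], by exact_mod_cast NeZero.ne N⟩
    · exact ⟨c, hc, h⟩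
  obtain ⟨d, hd⟩ := ZMod.intCast_surjective (g 1 1)
  have hdet : g 0 0 * g 1 1 - g 0 1 * g 1 0 = 1 := by
    rw [← Matrix.det_fin_two, g.det_coe]
  have hN : (N : ℤ) ∣ a * d - b * c - 1 := by
    rw [← ZMod.intCast_zmod_eq_zero_iff_dvd]
    push_cast
    rw [ha, hb, hc, hd, hdet, sub_self]
  obtain ⟨t, x, y, hxy⟩ := exists_isCoprime_add_mul (n := N) (d := d) hc0 (by
    intro p hp hpc hpd hpN
    have h1 : (p : ℤ) ∣ a * d - b * c - (a * d - b * c - 1) :=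
      dvd_sub (dvd_sub (hpd.mul_left a) (hpc.mul_left b)) (hpN.trans hN)
    rw [sub_sub_cancel] at h1
    exact (Nat.prime_iff_prime_int.mp hp).not_dvd_one h1)
  let s : ℤ := (a - y) * x + (b + x) * y
  refine ⟨⟨!![y + s * c, -x + s * (d + N * t); c, d + N * t], ?_⟩,
    Matrix.SpecialLinearGroup.ext _ _ fun i j => ?_⟩
  · rw [Matrix.det_fin_two_of]
    linear_combination hxy
  · have hxy' : (x : ZMod N) * g 1 0 + y * g 1 1 = 1 := by
      have := congrArg (Int.cast : ℤ → ZMod N) hxy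
      push_cast at this
      simpa [hc, hd] using this
    change ((!![y + s * c, -x + s * (d + N * t); c, d + N * t] i j : ℤ) : ZMod N) = g i j
    fin_cases i <;> fin_cases j <;> simp [s, ha, hb, hc, hd]
    · linear_combination (g 0 0 - y) * hxy' - y * hdet + y * hxy'
    · linear_combination (g 0 1 + x) * hxy' + x * hdet - x * hxy'

/-! ### The subgroup `±Γ(N)` -/

theorem SL2ZtoSL2R_apply (γ : SpecialLinearGroup (Fin 2) ℤ) (i j : Fin 2) :
    SL2ZtoSL2R γ i j = (γ i j : ℝ) := rfl

theorem SL2ZtoSL2R_injective : Function.Injective SL2ZtoSL2R := by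
  intro γ δ h
  ext i j
  have := congrArg (fun m : SpecialLinearGroup (Fin 2) ℝ => m i j) h
  simpa [SL2ZtoSL2R_apply] using this

theorem SL2ZtoSL2R_neg (γ : SpecialLinearGroup (Fin 2) ℤ) :
    SL2ZtoSL2R (-γ) = -SL2ZtoSL2R γ := by
  ext i j
  simp [SL2ZtoSL2R_apply]

theorem mem_zpowers_neg_one {G : Type*} [Group G] [HasDistribNeg G] {x : G} :
    x ∈ Subgroup.zpowers (-1 : G) ↔ x = 1 ∨ x = -1 := by
  constructor
  · rintro ⟨k, rfl⟩
    rcases Int.even_or_odd k with h | h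
    · exact Or.inl h.neg_one_zpow
    · exact Or.inr h.neg_one_zpow
  · rintro (rfl | rfl)
    · exact one_mem _
    · exact Subgroup.mem_zpowers _

theorem mem_PMGamma {N : ℕ} {x : SpecialLinearGroup (Fin 2) ℝ} :
    x ∈ PMGamma N ↔ ∃ γ ∈ Gamma N, x = SL2ZtoSL2R γ ∨ x = -SL2ZtoSL2R γ := by
  have hn : (Subgroup.zpowers (-1 : SpecialLinearGroup (Fin 2) ℝ)).Normal := by
    constructor
    intro x hx g
    rw [mem_zpowers_neg_one] at hx ⊢
    rcases hx with rfl | rfl <;> simp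
  rw [PMGamma, Subgroup.mem_sup_of_normal_right]
  constructor
  · rintro ⟨_, ⟨γ, hγ, rfl⟩, z, hz, rfl⟩
    refine ⟨γ, hγ, ?_⟩
    rcases mem_zpowers_neg_one.mp hz with rfl | rfl
    · exact Or.inl (mul_one _)
    · exact Or.inr (mul_neg_one _)
  · rintro ⟨γ, hγ, rfl | rfl⟩
    · exact ⟨_, ⟨γ, hγ, rfl⟩, 1, one_mem _, mul_one _⟩
    · exact ⟨_, ⟨γ, hγ, rfl⟩, -1, Subgroup.mem_zpowers _, mul_neg_one _⟩

theorem SL2ZtoSL2R_mem_PMGamma {N : ℕ} {γ : SpecialLinearGroup (Fin 2) ℤ} :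
    SL2ZtoSL2R γ ∈ PMGamma N ↔ γ ∈ Gamma N ∨ -γ ∈ Gamma N := by
  rw [mem_PMGamma]
  constructor
  · rintro ⟨δ, hδ, h | h⟩
    · exact Or.inl (SL2ZtoSL2R_injective h ▸ hδ)
    · rw [← SL2ZtoSL2R_neg] at h
      rw [SL2ZtoSL2R_injective h, neg_neg]
      exact Or.inr hδ
  · rintro (h | h)
    · exact ⟨_, h, Or.inl rfl⟩
    · exact ⟨_, h, Or.inr (by rw [SL2ZtoSL2R_neg, neg_neg])⟩

theorem SL2ZtoSL2R_mem_normalizer (N : ℕ) (γ : SpecialLinearGroup (Fin 2) ℤ) :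
    SL2ZtoSL2R γ ∈ Subgroup.normalizer (PMGamma N : Set (SpecialLinearGroup (Fin 2) ℝ)) := by
  have hle : SL2ZtoSL2R.range ≤
      Subgroup.normalizer (PMGamma N : Set (SpecialLinearGroup (Fin 2) ℝ)) := by
    rw [Subgroup.le_normalizer_iff]
    rintro _ ⟨γ, rfl⟩ k hk
    obtain ⟨δ, hδ, rfl | rfl⟩ := mem_PMGamma.mp hk
    · exact mem_PMGamma.mpr ⟨_, (Gamma_normal N).conj_mem δ hδ γ, Or.inl (by simp)⟩
    · exact mem_PMGamma.mpr ⟨_, (Gamma_normal N).conj_mem δ hδ γ, Or.inr (by simp)⟩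
  exact hle ⟨γ, rfl⟩

/-! ### The normalizer of `±Γ(N)` is `SL(2, ℤ)` -/

/-- If all pairwise products of entries in a real matrix of determinant `±1` are integral, then so
is its upper left entry. -/
theorem entry_integral_of_products_integral {a b c d : ℝ} {aa ab ac ad bb bc cc dd : ℤ}
    (haa : a * a = aa) (hab : a * b = ab) (hac : a * c = ac) (had : a * d = ad)
    (hbb : b * b = bb) (hbc : b * c = bc) (hcc : c * c = cc) (hdd : d * d = dd)
    (hdet : (a * d - b * c) ^ 2 = 1) :
    ∃ n : ℤ, a = n := by
  by_cases ha : a = 0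
  · exact ⟨0, by simp [ha]⟩
  obtain ⟨m, r, hmr, hm⟩ := Nat.sq_mul_squarefree aa.natAbs
  have haa0 : 0 < aa := by
    have : (0 : ℝ) < aa := haa ▸ mul_self_pos.mpr ha
    exact_mod_cast this
  have hmr' : (r : ℤ) ^ 2 * m = aa := by
    rw [← Int.natAbs_of_nonneg haa0.le, ← hmr]
    push_cast
    rfl
  have hr : (r : ℤ) ≠ 0 := by
    intro h
    rw [h] at hmr'
    simp at hmr'
    omega
  have hsq : Squarefree (m : ℤ) := Int.squarefree_natCast.mpr hm
  -- `r * m` divides every `x` with `x ^ 2 = aa * y`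
  have key : ∀ x y : ℤ, x ^ 2 = aa * y → (r : ℤ) * m ∣ x := by
    intro x y hxy
    obtain ⟨z, rfl⟩ : (r : ℤ) ∣ x := by
      rw [← Int.pow_dvd_pow_iff (n := 2) two_ne_zero]
      exact ⟨m * y, by rw [hxy, ← hmr']; ring⟩
    refine mul_dvd_mul_left _ ((hsq.dvd_pow_iff_dvd two_ne_zero).mp ⟨y, ?_⟩)
    have h2 : (r : ℤ) ^ 2 ≠ 0 := pow_ne_zero 2 hr
    apply mul_left_cancel₀ h2
    linear_combination hxy - y * hmr'
  have hxab := key ab bb (by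
    have : (ab : ℝ) ^ 2 = aa * bb := by rw [← haa, ← hab, ← hbb]; ring
    exact_mod_cast this)
  have hxac := key ac cc (by
    have : (ac : ℝ) ^ 2 = aa * cc := by rw [← haa, ← hac, ← hcc]; ring
    exact_mod_cast this)
  have hxad := key ad dd (by
    have : (ad : ℝ) ^ 2 = aa * dd := by rw [← haa, ← had, ← hdd]; ring
    exact_mod_cast this)
  have hmbc : (m : ℤ) ∣ bc := by
    obtain ⟨z, hz⟩ := mul_dvd_mul hxab hxac
    have hprod : ab * ac = aa * bc := by
      have : (ab : ℝ) * ac = aa * bc := by rw [← haa, ← hab, ← hac, ← hbc]; ring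
      exact_mod_cast this
    refine ⟨z, mul_left_cancel₀ haa0.ne' ?_⟩
    linear_combination hz - hprod + z * m * hmr'
  have hm1 : (m : ℤ) ∣ 1 := by
    have : (ad - bc) ^ 2 = 1 := by
      have : ((ad : ℝ) - bc) ^ 2 = 1 := by rw [← had, ← hbc, hdet]
      exact_mod_cast this
    rw [← this]
    exact dvd_pow (dvd_sub ((dvd_mul_left _ _).trans hxad) hmbc) two_ne_zero
  have hm2 : (m : ℤ) = 1 := Int.eq_one_of_dvd_one (Int.natCast_nonneg m) hm1
  rw [hm2, mul_one] at hmr'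
  have hsq : a ^ 2 = (r : ℝ) ^ 2 := by
    have : ((r : ℤ) : ℝ) ^ 2 = aa := by exact_mod_cast hmr'
    rw [sq a, haa, ← this, Int.cast_natCast]
  rcases sq_eq_sq_iff_eq_or_eq_neg.mp hsq with h | h
  · exact ⟨r, by simpa using h⟩
  · exact ⟨-r, by simpa using h⟩

/-- A real whose double and whose square are integers is an integer. -/
theorem exists_int_eq_of_two_mul_of_sq {x : ℝ} {m n : ℤ} (h2 : 2 * x = m) (hsq : x ^ 2 = n) :
    ∃ k : ℤ, x = k := by
  have h4 : m ^ 2 = 4 * n := by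
    have : (m : ℝ) ^ 2 = 4 * n := by rw [← h2, ← hsq]; ring
    exact_mod_cast this
  have hm : Even m := by
    rw [← Int.even_pow' two_ne_zero, h4]
    exact (by decide : Even (4 : ℤ)).mul_right n
  obtain ⟨k, rfl⟩ := hm
  exact ⟨k, by push_cast at h2; linarith⟩

/-- The transvection `1 + t • v vᵀ J` of determinant one attached to the vector `v = (x, y)`. -/
def vectorTransvection {R : Type*} [CommRing R] (t x y : R) : SpecialLinearGroup (Fin 2) R :=
  ⟨!![1 - t * (x * y), t * (x * x); -(t * (y * y)), 1 + t * (x * y)], by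
    rw [Matrix.det_fin_two_of]; ring⟩

theorem coe_vectorTransvection {R : Type*} [CommRing R] (t x y : R) :
    (vectorTransvection t x y : Matrix (Fin 2) (Fin 2) R) =
      !![1 - t * (x * y), t * (x * x); -(t * (y * y)), 1 + t * (x * y)] := rfl

theorem conj_vectorTransvection {R : Type*} [CommRing R] (g : SpecialLinearGroup (Fin 2) R)
    (t x y : R) : g * vectorTransvection t x y * g⁻¹ =
      vectorTransvection t (g 0 0 * x + g 0 1 * y) (g 1 0 * x + g 1 1 * y) := by
  have hdet : g 0 0 * g 1 1 - g 0 1 * g 1 0 = 1 := by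
    rw [← Matrix.det_fin_two, g.det_coe]
  refine Matrix.SpecialLinearGroup.ext _ _ fun i j => ?_
  rw [Matrix.SpecialLinearGroup.coe_mul, Matrix.SpecialLinearGroup.coe_mul,
    Matrix.SpecialLinearGroup.coe_inv, coe_vectorTransvection, coe_vectorTransvection,
    Matrix.adjugate_fin_two]
  fin_cases i <;> fin_cases j <;> simp [Matrix.mul_apply, Fin.sum_univ_two]
  · linear_combination hdet
  · ring
  · ring
  · linear_combination hdet

theorem vectorTransvection_mem_PMGamma (N : ℕ) (x y : ℤ) :
    vectorTransvection (N : ℝ) x y ∈ PMGamma N := by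
  refine mem_PMGamma.mpr ⟨vectorTransvection (N : ℤ) x y, ?_, Or.inl ?_⟩
  · rw [Gamma_mem]
    simp [vectorTransvection]
  · ext i j
    rw [SL2ZtoSL2R_apply, coe_vectorTransvection, coe_vectorTransvection]
    fin_cases i <;> fin_cases j <;> simp

theorem products_integral_of_vectorTransvection_mem {N : ℕ} (hN : 5 ≤ N) {x y : ℝ}
    (h : vectorTransvection (N : ℝ) x y ∈ PMGamma N) :
    ∃ k l m : ℤ, x * x = k ∧ x * y = l ∧ y * y = m := by
  have hN0 : (N : ℝ) ≠ 0 := by positivity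
  obtain ⟨γ, hγ, h⟩ := mem_PMGamma.mp h
  obtain ⟨h00, h01, h10, h11⟩ := Gamma_mem.mp hγ
  have entry : ∀ {A B : SpecialLinearGroup (Fin 2) ℝ} (i j : Fin 2), A = B → A i j = B i j :=
    fun i j h => h ▸ rfl
  rcases h with h | h
  · have e00 : 1 - (N : ℝ) * (x * y) = γ 0 0 := entry 0 0 h
    have e01 : (N : ℝ) * (x * x) = γ 0 1 := entry 0 1 h
    have e10 : -((N : ℝ) * (y * y)) = γ 1 0 := entry 1 0 h
    obtain ⟨k, hk⟩ := (ZMod.intCast_zmod_eq_zero_iff_dvd _ N).mp h01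
    obtain ⟨m, hm⟩ := (ZMod.intCast_zmod_eq_zero_iff_dvd _ N).mp h10
    obtain ⟨l, hl⟩ := (ZMod.intCast_zmod_eq_zero_iff_dvd (γ 0 0 - 1) N).mp (by simp [h00])
    have hl' : ((γ 0 0 : ℤ) : ℝ) - 1 = N * l := by exact_mod_cast hl
    rw [hk] at e01
    rw [hm] at e10
    refine ⟨k, -l, -m, mul_left_cancel₀ hN0 ?_, mul_left_cancel₀ hN0 ?_, mul_left_cancel₀ hN0 ?_⟩
    · push_cast at e01 ⊢
      exact e01
    · push_cast
      linarith
    · push_cast at e10 ⊢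
      linarith
  · exfalso
    have e00 : 1 - (N : ℝ) * (x * y) = -γ 0 0 := entry 0 0 h
    have e11 : 1 + (N : ℝ) * (x * y) = -γ 1 1 := entry 1 1 h
    have htr : γ 0 0 + γ 1 1 = -2 := by
      have : ((γ 0 0 : ℤ) : ℝ) + (γ 1 1 : ℤ) = -2 := by linarith
      exact_mod_cast this
    have h4 : ((4 : ℕ) : ZMod N) = 0 := by
      have := congrArg (Int.cast : ℤ → ZMod N) htr
      push_cast at this ⊢
      rw [h00, h11] at this
      linear_combination this
    have := Nat.le_of_dvd (by norm_num) ((ZMod.natCast_eq_zero_iff 4 N).mp h4)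
    omega

theorem mem_range_of_mem_normalizer {N : ℕ} (hN : 5 ≤ N) {g : SpecialLinearGroup (Fin 2) ℝ}
    (hg : g ∈ Subgroup.normalizer (PMGamma N : Set (SpecialLinearGroup (Fin 2) ℝ))) :
    g ∈ SL2ZtoSL2R.range := by
  have hprod : ∀ p q : ℤ, _ := fun p q => products_integral_of_vectorTransvection_mem hN
    (conj_vectorTransvection g (N : ℝ) p q ▸
      (Subgroup.mem_normalizer_iff.mp hg _).mp (vectorTransvection_mem_PMGamma N p q))
  have hdet : g 0 0 * g 1 1 - g 0 1 * g 1 0 = 1 := by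
    rw [← Matrix.det_fin_two, g.det_coe]
  obtain ⟨aa, ac, cc, haa, hac, hcc⟩ := hprod 1 0
  obtain ⟨bb, bd, dd, hbb, hbd, hdd⟩ := hprod 0 1
  obtain ⟨k, l, m, hk, hl, hm⟩ := hprod 1 1
  simp only [Int.cast_one, Int.cast_zero, mul_one, mul_zero, add_zero, zero_add] at *
  obtain ⟨ab, hab⟩ := exists_int_eq_of_two_mul_of_sq (x := g 0 0 * g 0 1)
    (m := k - aa - bb) (n := aa * bb)
    (by push_cast; rw [← hk, ← haa, ← hbb]; ring) (by push_cast; rw [← haa, ← hbb]; ring)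
  obtain ⟨cd, hcd⟩ := exists_int_eq_of_two_mul_of_sq (x := g 1 0 * g 1 1)
    (m := m - cc - dd) (n := cc * dd)
    (by push_cast; rw [← hm, ← hcc, ← hdd]; ring) (by push_cast; rw [← hcc, ← hdd]; ring)
  obtain ⟨ad, had⟩ := exists_int_eq_of_two_mul_of_sq (x := g 0 0 * g 1 1)
    (m := l - ac - bd + 1) (n := aa * dd)
    (by push_cast; rw [← hl, ← hac, ← hbd]; linear_combination hdet)
    (by push_cast; rw [← haa, ← hdd]; ring)
  have hbc : g 0 1 * g 1 0 = (ad - 1 : ℤ) := by push_cast; linarith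
  obtain ⟨a, ha⟩ := entry_integral_of_products_integral haa hab hac had hbb hbc hcc hdd
    (by rw [hdet, one_pow])
  obtain ⟨b, hb⟩ := entry_integral_of_products_integral hbb ((mul_comm _ _).trans hab) hbd hbc haa
    had hdd hcc (by linear_combination (g 0 0 * g 1 1 - g 0 1 * g 1 0 + 1) * hdet)
  obtain ⟨c, hc⟩ := entry_integral_of_products_integral hcc hcd ((mul_comm _ _).trans hac)
    ((mul_comm _ _).trans hbc) hdd ((mul_comm _ _).trans had) haa hbb
    (by linear_combination (g 0 0 * g 1 1 - g 0 1 * g 1 0 + 1) * hdet)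
  obtain ⟨d, hd⟩ := entry_integral_of_products_integral hdd ((mul_comm _ _).trans hcd)
    ((mul_comm _ _).trans hbd) ((mul_comm _ _).trans had) hcc ((mul_comm _ _).trans hbc) hbb haa
    (by linear_combination (g 0 0 * g 1 1 - g 0 1 * g 1 0 + 1) * hdet)
  refine ⟨⟨!![a, b; c, d], ?_⟩, Matrix.SpecialLinearGroup.ext _ _ fun i j => ?_⟩
  · rw [Matrix.det_fin_two_of]
    rw [ha, hb, hc, hd] at hdet
    exact_mod_cast hdet
  · change ((!![a, b; c, d] i j : ℤ) : ℝ) = g i j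
    fin_cases i <;> fin_cases j <;> simp [ha, hb, hc, hd]

/-- For `N ≥ 5`, the quotient of the normalizer in `SL(2, ℝ)` of `±Γ(N)` by `±Γ(N)` is
isomorphic to `PSL(2, ℤ/Nℤ) = SL(2, ℤ/Nℤ)/{±1}`. -/
theorem normalizer_Gamma_quotient_iso_PSL2
    (N : ℕ) (hN : 5 ≤ N) :
    Nonempty
      ((Subgroup.normalizer (PMGamma N) ⧸
          (PMGamma N).subgroupOf (Subgroup.normalizer (PMGamma N))) ≃*
        (Matrix.SpecialLinearGroup (Fin 2) (ZMod N) ⧸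
          Subgroup.zpowers (-1 : Matrix.SpecialLinearGroup (Fin 2) (ZMod N)))) := by
  have : NeZero N := ⟨by omega⟩
  let φ : SpecialLinearGroup (Fin 2) ℤ →*
      Subgroup.normalizer (PMGamma N : Set (SpecialLinearGroup (Fin 2) ℝ)) :=
    SL2ZtoSL2R.codRestrict _ (SL2ZtoSL2R_mem_normalizer N)
  have hφ : Function.Surjective φ := by
    rintro ⟨g, hg⟩
    obtain ⟨γ, rfl⟩ := mem_range_of_mem_normalizer hN hg
    exact ⟨γ, rfl⟩
  let Φ := (QuotientGroup.mk' ((PMGamma N).subgroupOf (Subgroup.normalizer (PMGamma N)))).comp φ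
  let Ψ := (QuotientGroup.mk' (Subgroup.zpowers (-1 : SpecialLinearGroup (Fin 2) (ZMod N)))).comp
    (Matrix.SpecialLinearGroup.map (Int.castRingHom (ZMod N)))
  have hΦ : Function.Surjective Φ := (QuotientGroup.mk'_surjective _).comp hφ
  have hΨ : Function.Surjective Ψ :=
    (QuotientGroup.mk'_surjective _).comp (SL2_reduction_surjective N)
  have hker : Φ.ker = Ψ.ker := by
    ext γ
    have h1 : γ ∈ Φ.ker ↔ SL2ZtoSL2R γ ∈ PMGamma N :=
      (QuotientGroup.eq_one_iff (φ γ)).trans Subgroup.mem_subgroupOf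
    have h2 : γ ∈ Ψ.ker ↔ Matrix.SpecialLinearGroup.map (Int.castRingHom (ZMod N)) γ ∈
        Subgroup.zpowers (-1 : SpecialLinearGroup (Fin 2) (ZMod N)) :=
      QuotientGroup.eq_one_iff _
    have h3 : Matrix.SpecialLinearGroup.map (Int.castRingHom (ZMod N)) (-γ) =
        -Matrix.SpecialLinearGroup.map (Int.castRingHom (ZMod N)) γ := by
      ext i j
      simp
    rw [h1, h2, SL2ZtoSL2R_mem_PMGamma, mem_zpowers_neg_one, Gamma_mem', Gamma_mem', h3,
      neg_eq_iff_eq_neg]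
  exact ⟨((QuotientGroup.quotientKerEquivOfSurjective Φ hΦ).symm.trans
    (QuotientGroup.quotientMulEquivOfEq hker)).trans
    (QuotientGroup.quotientKerEquivOfSurjective Ψ hΨ)⟩
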